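/- For all i, j, g, h ∈ {0,1,…,d}, the matrices G_{ij} satisfy G_{ij} G_{gh} = δ_{jg} G_{ih}, where δ_{jg} is the Kronecker delta (i.e., the product is G_{ih} if j = g and 0 otherwise). -/

import Mathlib

open Finset Matrix

/-- Vertex set of the wreath product `K_{n 0} ≀ K_{n 1} ≀ ⋯ ≀ K_{n (d-1)}`
(paper indices `n_1, …, n_d` correspond to `n 0, …, n (d-1)`). -/
abbrev Vx (d : ℕ) (n : ℕ → ℕ) : Type := (i : Fin d) → Fin (n i)

/-- `delta x y = 0` if `x = y`; otherwise `delta x y` is the largest (1-based)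
index at which `x` and `y` differ. -/
def delta {d : ℕ} {n : ℕ → ℕ} (x y : Vx d n) : ℕ :=
  (Finset.univ.filter fun i => x i ≠ y i).sup fun i => (i : ℕ) + 1

/-- The `i`-th adjacency matrix of the wreath product: `(A i) x y = 1` iff `delta x y = i`. -/
noncomputable def A (d : ℕ) (n : ℕ → ℕ) (i : ℕ) : Matrix (Vx d n) (Vx d n) ℂ :=
  Matrix.of fun x y => if delta x y = i then 1 else 0

/-- The valencies: `k 0 = 1` and, for `1 ≤ i`, `k i = n_1 ⋯ n_{i-1} (n_i - 1)`,
i.e. `k i = n 0 ⋯ n (i-2) * (n (i-1) - 1)`. -/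
def k (n : ℕ → ℕ) (i : ℕ) : ℕ :=
  if i = 0 then 1 else (∏ j ∈ Finset.range (i - 1), n j) * (n (i - 1) - 1)

/-- The dual idempotent `E_i*` with respect to the base point `x₀`: the diagonal
0-1 matrix with `(E_i*)_{yy} = 1` iff `delta x₀ y = i`. -/
noncomputable def Es {d : ℕ} {n : ℕ → ℕ} (x₀ : Vx d n) (i : ℕ) :
    Matrix (Vx d n) (Vx d n) ℂ :=
  Matrix.of fun y z => if y = z ∧ delta x₀ y = i then 1 else 0

/-- The all-ones matrix `J`. -/
noncomputable def Jm (d : ℕ) (n : ℕ → ℕ) : Matrix (Vx d n) (Vx d n) ℂ :=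
  Matrix.of fun _ _ => 1

/-- The matrices `G i j`. -/
noncomputable def G {d : ℕ} {n : ℕ → ℕ} (x₀ : Vx d n) (i j : ℕ) :
    Matrix (Vx d n) (Vx d n) ℂ :=
  if i < j then ((k n j : ℂ))⁻¹ • (Es x₀ i * A d n j * Es x₀ j)
  else if j < i then ((k n j : ℂ))⁻¹ • (Es x₀ i * A d n i * Es x₀ j)
  else ((k n i : ℂ))⁻¹ • (Es x₀ i * Jm d n * Es x₀ i)

/-- The span `U` of the matrices `G i j`, `i, j ∈ [d]`. -/
noncomputable def Uspan {d : ℕ} {n : ℕ → ℕ} (x₀ : Vx d n) :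
    Submodule ℂ (Matrix (Vx d n) (Vx d n) ℂ) :=
  Submodule.span ℂ (Set.range fun p : Fin (d + 1) × Fin (d + 1) => G x₀ p.1 p.2)

/-- The Terwilliger algebra of the wreath product with respect to `x₀`. -/
noncomputable def Ter {d : ℕ} {n : ℕ → ℕ} (x₀ : Vx d n) :
    Subalgebra ℂ (Matrix (Vx d n) (Vx d n) ℂ) :=
  Algebra.adjoin ℂ
    ((Set.range fun i : Fin (d + 1) => A d n i) ∪ (Set.range fun i : Fin (d + 1) => Es x₀ i))

/-- The matrices `F i h`, for `1 ≤ i ≤ d` and `0 ≤ h ≤ i - 1`. -/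
noncomputable def F {d : ℕ} {n : ℕ → ℕ} (x₀ : Vx d n) (i h : ℕ) :
    Matrix (Vx d n) (Vx d n) ℂ :=
  if h < i - 1 then
    (∑ j ∈ Finset.range (h + 1), (k n j : ℂ))⁻¹ •
        (∑ j ∈ Finset.range (h + 1), Es x₀ i * A d n j * Es x₀ i)
      - (∑ j ∈ Finset.range (h + 2), (k n j : ℂ))⁻¹ •
          (∑ j ∈ Finset.range (h + 2), Es x₀ i * A d n j * Es x₀ i)
  else
    (∑ j ∈ Finset.range i, (k n j : ℂ))⁻¹ •
        (∑ j ∈ Finset.range i, Es x₀ i * A d n j * Es x₀ i)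
      - G x₀ i i

theorem delta_le_iff {d : ℕ} {n : ℕ → ℕ} (x y : Vx d n) (j : ℕ) :
    delta x y ≤ j ↔ ∀ i : Fin d, j ≤ (i : ℕ) → x i = y i := by
  unfold delta
  rw [Finset.sup_le_iff]
  constructor
  · intro H i hi
    by_contra hne
    have := H i (by simp [hne])
    omega
  · intro H i hi
    by_contra hlt
    have h1 : x i ≠ y i := by simpa using hi
    exact h1 (H i (by omega))

theorem delta_symm {d : ℕ} {n : ℕ → ℕ} (x y : Vx d n) : delta x y = delta y x := by
  unfold delta
  simp only [ne_comm]

theorem delta_tri {d : ℕ} {n : ℕ → ℕ} (x y z : Vx d n) :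
    delta x z ≤ max (delta x y) (delta y z) := by
  rw [delta_le_iff]
  intro i hi
  have h1 := (delta_le_iff x y _).1 (le_refl _) i (le_trans (le_max_left _ _) hi)
  have h2 := (delta_le_iff y z _).1 (le_refl _) i (le_trans (le_max_right _ _) hi)
  exact h1.trans h2

theorem delta_of_lt {d : ℕ} {n : ℕ → ℕ} (x y z : Vx d n) (hlt : delta x y < delta x z) :
    delta y z = delta x z := by
  have h1 := delta_tri x y z
  have h2 := delta_tri y x z
  rw [delta_symm y x] at h2
  rcases le_max_iff.1 h1 with h3 | h3
  · omega
  · rw [max_eq_right hlt.le] at h2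
    omega

theorem card_delta_le {d : ℕ} {n : ℕ → ℕ} (x : Vx d n) (j : ℕ) (hj : j ≤ d) :
    (Finset.univ.filter fun z : Vx d n => delta x z ≤ j).card = ∏ i ∈ Finset.range j, n i := by
  have h1 : (Finset.univ.filter fun z : Vx d n => delta x z ≤ j) =
      Fintype.piFinset (fun i : Fin d => if (i : ℕ) < j then Finset.univ else {x i}) := by
    ext z
    simp only [Finset.mem_filter, Finset.mem_univ, true_and, delta_le_iff, Fintype.mem_piFinset]
    refine forall_congr' fun i => ?_
    by_cases hi : (i : ℕ) < j
    · simp [hi]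
    · simp [hi, not_lt.1 hi, eq_comm]
  rw [h1, Fintype.card_piFinset]
  have h2 : ∀ i : Fin d, (if (i : ℕ) < j then (Finset.univ : Finset (Fin (n i))) else {x i}).card
      = (fun m : ℕ => if m < j then n m else 1) i := by
    intro i
    by_cases hi : (i : ℕ) < j <;> simp [hi]
  rw [Finset.prod_congr rfl fun i _ => h2 i,
    Fin.prod_univ_eq_prod_range (fun m : ℕ => if m < j then n m else 1) d, ← Finset.prod_filter]
  congr 1
  ext m
  simp
  omega

theorem card_delta {d : ℕ} {n : ℕ → ℕ} (x : Vx d n) (j : ℕ) (hj : j ≤ d) :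
    (Finset.univ.filter fun z : Vx d n => delta x z = j).card = k n j := by
  cases j with
  | zero =>
    have := card_delta_le x 0 hj
    simpa [k] using this
  | succ j =>
    have h1 := card_delta_le x (j + 1) hj
    have h2 := card_delta_le x j (by omega)
    have h3 : (Finset.univ.filter fun z : Vx d n => delta x z ≤ j + 1) =
        (Finset.univ.filter fun z : Vx d n => delta x z ≤ j) ∪
        (Finset.univ.filter fun z : Vx d n => delta x z = j + 1) := by
      ext z
      simp
      omega
    rw [h3, Finset.card_union_of_disjoint, h2, Finset.prod_range_succ] at h1
    · simp only [k, Nat.add_sub_cancel, Nat.succ_ne_zero, if_false, Nat.mul_sub, mul_one]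
      omega
    · rw [Finset.disjoint_left]
      intro z
      simp
      omega

theorem k_ne_zero {d : ℕ} {n : ℕ → ℕ} (hn : ∀ i < d, 2 ≤ n i) (j : ℕ) (hj : j ≤ d) :
    k n j ≠ 0 := by
  unfold k
  split_ifs with h0
  · simp
  · refine mul_ne_zero (Finset.prod_ne_zero_iff.2 fun i hi => ?_) ?_
    · have := hn i (by have := Finset.mem_range.1 hi; omega)
      omega
    · have := hn (j - 1) (by omega)
      omega

theorem EME_apply {d : ℕ} {n : ℕ → ℕ} (x₀ : Vx d n) (i j : ℕ)
    (M : Matrix (Vx d n) (Vx d n) ℂ) (y z : Vx d n) :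
    (Es x₀ i * M * Es x₀ j) y z =
      if delta x₀ y = i ∧ delta x₀ z = j then M y z else 0 := by
  have hE : ∀ l, Es x₀ l = Matrix.diagonal (fun y => if delta x₀ y = l then (1 : ℂ) else 0) := by
    intro l
    ext a b
    by_cases hab : a = b
    · subst hab; simp [Es]
    · simp [Es, hab]
  rw [hE, hE, Matrix.mul_diagonal, Matrix.diagonal_mul]
  by_cases h1 : delta x₀ y = i <;> by_cases h2 : delta x₀ z = j <;> simp [h1, h2]

theorem G_apply {d : ℕ} {n : ℕ → ℕ} (x₀ : Vx d n) (i j : ℕ) (y z : Vx d n) :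
    G x₀ i j y z = if delta x₀ y = i ∧ delta x₀ z = j then ((k n j : ℂ))⁻¹ else 0 := by
  unfold G
  split_ifs with h1 h2 h3 h3 h4 h4
  all_goals rw [Matrix.smul_apply, EME_apply]
  · rw [if_pos h2, A, Matrix.of_apply, if_pos, smul_eq_mul, mul_one]
    rw [delta_of_lt x₀ y z (by omega), h2.2]
  · rw [if_neg h2, smul_zero]
  · rw [if_pos h3, A, Matrix.of_apply, if_pos, smul_eq_mul, mul_one]
    rw [delta_symm, delta_of_lt x₀ z y (by omega), h3.1]
  · rw [if_neg h3, smul_zero]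
  · have : i = j := by omega
    subst this
    rw [if_pos h4, Jm, Matrix.of_apply, smul_eq_mul, mul_one]
  · have : i = j := by omega
    subst this
    rw [if_neg h4, smul_zero]

/-- `G i j * G g h = δ_{j g} G i h`. -/
theorem stmt15 (d : ℕ) (hd : 1 ≤ d) (n : ℕ → ℕ) (hn : ∀ i < d, 2 ≤ n i)
    (x₀ : Vx d n) (i j g h : ℕ) (hi : i ≤ d) (hj : j ≤ d) (hg : g ≤ d) (hh : h ≤ d) :
    G x₀ i j * G x₀ g h = if j = g then G x₀ i h else 0 := by
  ext y z
  rw [Matrix.mul_apply]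
  simp only [G_apply]
  by_cases hjg : j = g
  · subst hjg
    rw [if_pos rfl, G_apply]
    by_cases hyz : delta x₀ y = i ∧ delta x₀ z = h
    · obtain ⟨h1, h2⟩ := hyz
      have hk : (k n j : ℂ) ≠ 0 := Nat.cast_ne_zero.2 (k_ne_zero hn j hj)
      have : ∀ w : Vx d n, ((if delta x₀ y = i ∧ delta x₀ w = j then ((k n j : ℂ))⁻¹ else 0) *
          (if delta x₀ w = j ∧ delta x₀ z = h then ((k n h : ℂ))⁻¹ else 0)) =
          if delta x₀ w = j then ((k n j : ℂ))⁻¹ * ((k n h : ℂ))⁻¹ else 0 := by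
        intro w
        by_cases hw : delta x₀ w = j <;> simp [h1, h2, hw]
      rw [Finset.sum_congr rfl fun w _ => this w, ← Finset.sum_filter, Finset.sum_const,
        card_delta x₀ j hj, nsmul_eq_mul, ← mul_assoc, mul_inv_cancel₀ hk, one_mul,
        if_pos ⟨h1, h2⟩]
    · rw [if_neg hyz]
      refine Finset.sum_eq_zero fun w _ => ?_
      rw [not_and_or] at hyz
      rcases hyz with h1 | h1 <;> simp [h1]
  · rw [if_neg hjg, Matrix.zero_apply]
    refine Finset.sum_eq_zero fun w _ => ?_
    by_cases hw : delta x₀ w = j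
    · simp [hw, hjg]
    · simp [hw]
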